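/- Let M ∈ ℝ^{m×n} be entrywise nonnegative such that the vertices of conv(θ(M)) are non-repeated. Then there exists an optimal solution B* ∈ B*(M) of problem (tigrel) with ρ(B*) < 1, i.e., such that Q = I − B* is invertible with Q⁻¹ entrywise nonnegative. -/

import Mathlib

open Matrix BigOperators

/-- The column `j` of `M` normalized to unit ℓ₁-norm. -/
noncomputable def normCol {m n : ℕ} (M : Matrix (Fin m) (Fin n) ℝ) (j : Fin n) : Fin m → ℝ :=
  (∑ i, |M i j|)⁻¹ • fun i => M i j

/-- Column `j` of `M` is nonzero. -/
def colNZ {m n : ℕ} (M : Matrix (Fin m) (Fin n) ℝ) (j : Fin n) : Prop :=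
  (fun i => M i j) ≠ 0

/-- `θ(M)`: the set of ℓ₁-normalized nonzero columns of `M`. -/
noncomputable def thetaCols {m n : ℕ} (M : Matrix (Fin m) (Fin n) ℝ) : Set (Fin m → ℝ) :=
  {x | ∃ j, colNZ M j ∧ x = normCol M j}

/-- The nonnegative rank of `M`. -/
noncomputable def nnRank {m n : ℕ} (M : Matrix (Fin m) (Fin n) ℝ) : ℕ :=
  sInf {r : ℕ | ∃ U : Matrix (Fin m) (Fin r) ℝ, ∃ V : Matrix (Fin r) (Fin n) ℝ,
    (∀ i j, 0 ≤ U i j) ∧ (∀ i j, 0 ≤ V i j) ∧ M = U * V}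

/-- The squared Frobenius norm. -/
noncomputable def frobSq {m n : ℕ} (A : Matrix (Fin m) (Fin n) ℝ) : ℝ :=
  ∑ i, ∑ j, (A i j) ^ 2

/-- Feasibility for problem (tigrel): `B ≥ 0`, zero diagonal, `MB ≤ M` entrywise. -/
def TigrelFeasible {m n : ℕ} (M : Matrix (Fin m) (Fin n) ℝ)
    (B : Matrix (Fin n) (Fin n) ℝ) : Prop :=
  (∀ i j, 0 ≤ B i j) ∧ (∀ i, B i i = 0) ∧ ∀ i j, (M * B) i j ≤ M i j

/-- Optimality for problem (tigrel): feasible and minimizes `‖M - MB‖_F²`. -/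
def TigrelOpt {m n : ℕ} (M : Matrix (Fin m) (Fin n) ℝ)
    (B : Matrix (Fin n) (Fin n) ℝ) : Prop :=
  TigrelFeasible M B ∧
    ∀ B', TigrelFeasible M B' → frobSq (M - M * B) ≤ frobSq (M - M * B')

/-- A monomial matrix: permutation of a diagonal matrix with positive diagonal. -/
def IsMonomial {k : ℕ} (P : Matrix (Fin k) (Fin k) ℝ) : Prop :=
  ∃ (σ : Equiv.Perm (Fin k)) (d : Fin k → ℝ), (∀ i, 0 < d i) ∧
    ∀ i j, P i j = if i = σ j then d j else 0

/-- Every extreme point of `conv(θ(M))` equals `θ(M_{:j})` for exactly one column `j`. -/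
def NonRepeatedVertices {m n : ℕ} (M : Matrix (Fin m) (Fin n) ℝ) : Prop :=
  ∀ x ∈ Set.extremePoints ℝ (convexHull ℝ (thetaCols M)),
    ∃! j : Fin n, colNZ M j ∧ x = normCol M j

/-- Uniqueness of size-`r` exact NMF up to permutation and scaling. -/
def UniqueNMF {m n : ℕ} (r : ℕ) (M : Matrix (Fin m) (Fin n) ℝ) : Prop :=
  ∀ (U₁ U₂ : Matrix (Fin m) (Fin r) ℝ) (V₁ V₂ : Matrix (Fin r) (Fin n) ℝ),
    (∀ i j, 0 ≤ U₁ i j) → (∀ i j, 0 ≤ V₁ i j) →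
    (∀ i j, 0 ≤ U₂ i j) → (∀ i j, 0 ≤ V₂ i j) →
    M = U₁ * V₁ → M = U₂ * V₂ →
    ∃ P : Matrix (Fin r) (Fin r) ℝ, IsMonomial P ∧ U₂ = U₁ * P ∧ V₂ = P⁻¹ * V₁

/-- Separability of a factorization, expressed as a property of the right factor `V`. -/
def SeparableFactor {r n : ℕ} (V : Matrix (Fin r) (Fin n) ℝ) : Prop :=
  ∀ i : Fin r, ∃ j : Fin n, V i j ≠ 0 ∧ ∀ i' : Fin r, i' ≠ i → V i' j = 0

/-- The Frobenius norm. -/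
noncomputable def frobNorm {m n : ℕ} (A : Matrix (Fin m) (Fin n) ℝ) : ℝ :=
  Real.sqrt (∑ i, ∑ j, (A i j) ^ 2)

/-- The Euclidean (ℓ₂) norm of a vector. -/
noncomputable def vecNorm2 {n : ℕ} (x : Fin n → ℝ) : ℝ :=
  Real.sqrt (∑ i, (x i) ^ 2)

/-- The spectral (operator 2-) norm of a matrix. -/
noncomputable def specNorm {m n : ℕ} (A : Matrix (Fin m) (Fin n) ℝ) : ℝ :=
  sSup {c : ℝ | ∃ x : Fin n → ℝ, vecNorm2 x ≤ 1 ∧ c = vecNorm2 (A.mulVec x)}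

/-! The objective and the constraints of (tigrel) decouple over the columns of `B`. A column of
`M` whose normalization is not a vertex is a nonnegative combination of the vertex columns, so the
matching column of `B` can be chosen optimal and supported on vertex indices; the remaining
columns of `B` are arbitrary minimizers. Suppose `0 ≤ x ≤ B x`. Then `M x ≤ M B x ≤ M x`, so
column `j` of `M B` equals column `j` of `M` whenever `x j ≠ 0`. For a vertex `j` this is
impossible, since `B j j = 0` and a non-repeated vertex is not a convex combination of the other
normalized columns; so `x` vanishes on the vertex indices, and then everywhere because `B` has no
entry between two non-vertex indices. A nonnegative matrix admitting no nonzero `x` with `0 ≤ x ≤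
B x` has spectral radius less than one and `1 - B` is inverse positive.
-/

section NonnegativeMatrices

variable {ι κ R : Type*} [Fintype κ] [Field R] [LinearOrder R] [IsStrictOrderedRing R]

lemma mulVec_le_mulVec_of_nonneg {A : Matrix ι κ R} (hA : ∀ i j, 0 ≤ A i j) {x y : κ → R}
    (hxy : x ≤ y) : A *ᵥ x ≤ A *ᵥ y :=
  fun i => dotProduct_le_dotProduct_of_nonneg_left hxy (hA i)

lemma mul_apply_eq_of_le_mulVec {M : Matrix ι κ R} {B : Matrix κ κ R} (hM : ∀ i j, 0 ≤ M i j)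
    (hMB : ∀ i j, (M * B) i j ≤ M i j) {x : κ → R} (hx : 0 ≤ x) (hxB : x ≤ B *ᵥ x) {j : κ}
    (hj : x j ≠ 0) (i : ι) : (M * B) i j = M i j := by
  have hle : ∀ k ∈ Finset.univ, (M * B) i k * x k ≤ M i k * x k :=
    fun k _ => mul_le_mul_of_nonneg_right (hMB i k) (hx k)
  have hge : (M *ᵥ x) i ≤ ((M * B) *ᵥ x) i := by
    rw [← mulVec_mulVec]
    exact mulVec_le_mulVec_of_nonneg hM hxB i
  have hsum : ∑ k, (M * B) i k * x k = ∑ k, M i k * x k := (Finset.sum_le_sum hle).antisymm hge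
  exact mul_right_cancel₀ hj ((Finset.sum_eq_sum_iff_of_le hle).1 hsum j (Finset.mem_univ j))

/-- `B` has no nonzero subinvariant vector, i.e. no nonzero `x ≥ 0` with `x ≤ B x`. For nonnegative
`B` this is the form of `ρ(B) < 1` that is verified for the optimal solution. -/
def NoSubinvariantVector (B : Matrix κ κ R) : Prop :=
  ∀ x : κ → R, 0 ≤ x → x ≤ B *ᵥ x → x = 0

namespace NoSubinvariantVector

variable {B : Matrix κ κ R}

lemma nonneg_of_mulVec_le (hB : NoSubinvariantVector B) (hB0 : ∀ i j, 0 ≤ B i j) {x : κ → R}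
    (hx : B *ᵥ x ≤ x) : 0 ≤ x := by
  refine negPart_eq_zero.1 (hB x⁻ (negPart_nonneg x) (sup_le ?_ ?_))
  · calc -x ≤ -(B *ᵥ x) := neg_le_neg hx
      _ = B *ᵥ -x := (mulVec_neg x B).symm
      _ ≤ B *ᵥ x⁻ := mulVec_le_mulVec_of_nonneg hB0 (neg_le_negPart x)
  · exact fun i => dotProduct_nonneg_of_nonneg (hB0 i) (negPart_nonneg x)

variable [DecidableEq κ]

lemma isUnit_one_sub (hB : NoSubinvariantVector B) (hB0 : ∀ i j, 0 ≤ B i j) :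
    IsUnit (1 - B) := by
  refine mulVec_injective_iff_isUnit.1 ((injective_iff_map_eq_zero (1 - B).mulVecLin).2 ?_)
  intro x hx
  have hfix : x = B *ᵥ x := by
    rwa [mulVecLin_apply, sub_mulVec, one_mulVec, sub_eq_zero] at hx
  exact hB x (hB.nonneg_of_mulVec_le hB0 hfix.ge) hfix.le

lemma inv_one_sub_nonneg (hB : NoSubinvariantVector B) (hB0 : ∀ i j, 0 ≤ B i j) (i j : κ) :
    0 ≤ (1 - B)⁻¹ i j := by
  have hdet : IsUnit (1 - B).det := (isUnit_iff_isUnit_det _).1 (hB.isUnit_one_sub hB0)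
  have hcol : (1 - B) *ᵥ (1 - B)⁻¹.col j = Pi.single j 1 := by
    rw [← mulVec_single_one, mulVec_mulVec, mul_nonsing_inv _ hdet, one_mulVec]
  refine hB.nonneg_of_mulVec_le hB0 (x := (1 - B)⁻¹.col j) (sub_nonneg.1 ?_) i
  rw [sub_mulVec, one_mulVec] at hcol
  rw [hcol]
  exact Pi.single_nonneg.2 zero_le_one

lemma norm_lt_one_of_mem_spectrum {B : Matrix κ κ ℝ} (hB : NoSubinvariantVector B)
    (hB0 : ∀ i j, 0 ≤ B i j) {μ : ℂ} (hμ : μ ∈ spectrum ℂ (B.map (fun x => (x : ℂ)))) :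
    ‖μ‖ < 1 := by
  rw [← spectrum_toLin', ← Module.End.hasEigenvalue_iff_mem_spectrum] at hμ
  obtain ⟨v, hv⟩ := hμ.exists_hasEigenvector
  have hμv (k : κ) : μ * v k = ∑ j, (B k j : ℂ) * v j := (congrFun hv.apply_eq_smul k).symm
  by_contra! hμ1
  have hsub : (fun k => ‖v k‖) ≤ B *ᵥ fun k => ‖v k‖ := fun k => calc
    ‖v k‖ ≤ ‖μ‖ * ‖v k‖ := le_mul_of_one_le_left (norm_nonneg _) hμ1
    _ = ‖∑ j, (B k j : ℂ) * v j‖ := by rw [← norm_mul, hμv]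
    _ ≤ ∑ j, ‖(B k j : ℂ) * v j‖ := norm_sum_le _ _
    _ = ∑ j, B k j * ‖v j‖ := by
      simp only [norm_mul, Complex.norm_real, Real.norm_of_nonneg (hB0 k _)]
  have hzero := hB _ (fun k => norm_nonneg (v k)) hsub
  exact hv.2 (funext fun k => norm_eq_zero.1 (congrFun hzero k))

open scoped Matrix.Norms.Operator in
lemma spectralRadius_lt_one {B : Matrix κ κ ℝ} (hB : NoSubinvariantVector B)
    (hB0 : ∀ i j, 0 ≤ B i j) : spectralRadius ℂ (B.map (fun x => (x : ℂ))) < 1 := by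
  rcases (spectrum ℂ (B.map (fun x => (x : ℂ)))).eq_empty_or_nonempty with hempty | hne
  · simp [spectralRadius, hempty]
  · exact spectrum.spectralRadius_lt_of_forall_lt_of_nonempty hne
      fun μ hμ => hB.norm_lt_one_of_mem_spectrum hB0 hμ

end NoSubinvariantVector

end NonnegativeMatrices

section ColumnProblem

variable {ι κ : Type*} [Fintype κ] {M : Matrix ι κ ℝ}

lemma mulVec_indicator_col_ne_zero (M : Matrix ι κ ℝ) (b : κ → ℝ) :
    M *ᵥ {k | M.col k ≠ 0}.indicator b = M *ᵥ b := by
  ext i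
  refine Finset.sum_congr rfl fun k _ => ?_
  by_cases hk : M.col k = 0
  · simp [show M i k = 0 from congrFun hk i]
  · simp [hk]

lemma isCompact_setOf_mulVec_le (hM : ∀ i j, 0 ≤ M i j) (c : ι → ℝ) :
    IsCompact {b : κ → ℝ | 0 ≤ b ∧ (∀ k, M.col k = 0 → b k = 0) ∧ M *ᵥ b ≤ c} := by
  have hbound (k : κ) : ∃ C, ∀ b : κ → ℝ, 0 ≤ b → (∀ k, M.col k = 0 → b k = 0) → M *ᵥ b ≤ c →
      b k ≤ C := by
    by_cases hk : M.col k = 0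
    · exact ⟨0, fun b _ hb _ => (hb k hk).le⟩
    obtain ⟨i, hi⟩ := Function.ne_iff.1 hk
    refine ⟨c i / M i k, fun b hb0 _ hb => (le_div_iff₀' ((hM i k).lt_of_ne' hi)).2 ?_⟩
    calc M i k * b k ≤ (M *ᵥ b) i := Finset.single_le_sum (f := fun l => M i l * b l)
          (fun l _ => mul_nonneg (hM i l) (hb0 l)) (Finset.mem_univ k)
      _ ≤ c i := hb i
  choose C hC using hbound
  refine (isCompact_Icc (a := 0) (b := C)).of_isClosed_subset ?_
    fun b hb => ⟨hb.1, fun k => hC k b hb.1 hb.2.1 hb.2.2⟩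
  have hsupp : IsClosed {b : κ → ℝ | ∀ k, M.col k = 0 → b k = 0} := by
    simp only [Set.ofPred_forall]
    exact isClosed_iInter fun k => isClosed_iInter fun _ =>
      isClosed_eq (continuous_apply k) continuous_const
  exact (isClosed_le continuous_const continuous_id).inter
    (hsupp.inter (isClosed_le (continuous_const.matrix_mulVec continuous_id) continuous_const))

/-- The feasible set of the problem into which (tigrel) decouples for column `j` of `B`. -/
def columnFeasible (M : Matrix ι κ ℝ) (j : κ) : Set (κ → ℝ) :=
  {b | 0 ≤ b ∧ b j = 0 ∧ M *ᵥ b ≤ M.col j}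

variable [Fintype ι]

/-- The contribution `‖M_{:j} - M b‖²` of column `j` to the objective of (tigrel). -/
def columnResidual (M : Matrix ι κ ℝ) (j : κ) (b : κ → ℝ) : ℝ :=
  ∑ i, (M i j - (M *ᵥ b) i) ^ 2

/-- The optimal solutions of the problem into which (tigrel) decouples for column `j` of `B`. -/
def columnMinimizers (M : Matrix ι κ ℝ) (j : κ) : Set (κ → ℝ) :=
  {b ∈ columnFeasible M j | IsMinOn (columnResidual M j) (columnFeasible M j) b}

lemma continuous_columnResidual (M : Matrix ι κ ℝ) (j : κ) : Continuous (columnResidual M j) := by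
  unfold columnResidual mulVec dotProduct
  fun_prop

lemma mem_columnMinimizers_of_mulVec_eq {j : κ} {b : κ → ℝ} (hb : 0 ≤ b) (hbj : b j = 0)
    (hMb : M *ᵥ b = M.col j) : b ∈ columnMinimizers M j := by
  refine ⟨⟨hb, hbj, hMb.le⟩, fun b' _ => ?_⟩
  calc columnResidual M j b = 0 := by simp [columnResidual, hMb]
    _ ≤ columnResidual M j b' := Finset.sum_nonneg fun i _ => sq_nonneg _

/-- Coordinates of `b` at zero columns of `M` are unconstrained, so compactness is only available
after they have been set to zero, which does not change `M b`. -/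
lemma columnMinimizers_nonempty (hM : ∀ i j, 0 ≤ M i j) (j : κ) :
    (columnMinimizers M j).Nonempty := by
  have hcompact : IsCompact
      ({b : κ → ℝ | 0 ≤ b ∧ (∀ k, M.col k = 0 → b k = 0) ∧ M *ᵥ b ≤ M.col j} ∩ {b | b j = 0}) :=
    (isCompact_setOf_mulVec_le hM _).inter_right
      (isClosed_eq (continuous_apply j) continuous_const)
  obtain ⟨b, ⟨⟨hb0, -, hMb⟩, hbj⟩, hmin⟩ := hcompact.exists_isMinOn
    ⟨0, ⟨le_rfl, fun _ _ => rfl, (mulVec_zero M).trans_le fun i => hM i j⟩, rfl⟩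
    (continuous_columnResidual M j).continuousOn
  refine ⟨b, ⟨hb0, hbj, hMb⟩, fun b' ⟨hb'0, hb'j, hMb'⟩ => ?_⟩
  have htrunc := mulVec_indicator_col_ne_zero M b'
  calc columnResidual M j b ≤ columnResidual M j ({k | M.col k ≠ 0}.indicator b') :=
        hmin ⟨⟨Set.indicator_nonneg fun k _ => hb'0 k, fun k hk => by simp [hk],
          htrunc.trans_le hMb'⟩, by simp [Set.indicator_apply, hb'j]⟩
    _ = columnResidual M j b' := by simp only [columnResidual, htrunc]

lemma tigrelOpt_of_forall_col_mem_columnMinimizers {m n : ℕ} {M : Matrix (Fin m) (Fin n) ℝ}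
    {B : Matrix (Fin n) (Fin n) ℝ} (hB : ∀ j, B.col j ∈ columnMinimizers M j) : TigrelOpt M B := by
  have hfrob (A : Matrix (Fin n) (Fin n) ℝ) :
      frobSq (M - M * A) = ∑ j, columnResidual M j (A.col j) := Finset.sum_comm
  refine ⟨⟨fun i j => (hB j).1.1 i, fun j => (hB j).1.2.1, fun i j => (hB j).1.2.2 i⟩, ?_⟩
  rintro B' ⟨hB'0, hB'diag, hMB'⟩
  rw [hfrob, hfrob]
  exact Finset.sum_le_sum fun j _ =>
    (hB j).2 ⟨fun k => hB'0 k j, hB'diag j, fun i => hMB' i j⟩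

end ColumnProblem

section ExtremePoints

variable {E : Type*} [AddCommGroup E] [Module ℝ E]

lemma exists_eq_of_centerMass_mem_extremePoints {α : Type*} {s : Set E} (hs : Convex ℝ s)
    {t : Finset α} {w : α → ℝ} {z : α → E} (hw : ∀ a ∈ t, 0 ≤ w a) (hpos : 0 < ∑ a ∈ t, w a)
    (hz : ∀ a ∈ t, w a ≠ 0 → z a ∈ s) (hmem : t.centerMass w z ∈ s.extremePoints ℝ) :
    ∃ a ∈ t, w a ≠ 0 ∧ z a = t.centerMass w z := by
  classical
  let T : Set E := z '' {a | a ∈ t ∧ w a ≠ 0}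
  have hTs : convexHull ℝ T ⊆ s := by
    refine convexHull_min ?_ hs
    rintro _ ⟨a, ⟨hat, hwa⟩, rfl⟩
    exact hz a hat hwa
  have hmemT : t.centerMass w z ∈ convexHull ℝ T := by
    rw [← Finset.centerMass_filter_ne_zero]
    refine Finset.centerMass_mem_convexHull _ (fun a ha => hw a (Finset.mem_filter.1 ha).1) ?_
      fun a ha => ⟨a, Finset.mem_filter.1 ha, rfl⟩
    rwa [Finset.sum_filter_ne_zero]
  obtain ⟨a, ⟨hat, hwa⟩, hza⟩ := extremePoints_convexHull_subset
    (inter_extremePoints_subset_extremePoints_of_subset hTs ⟨hmemT, hmem⟩)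
  exact ⟨a, hat, hwa, hza⟩

lemma convexHull_extremePoints_convexHull_of_finite [TopologicalSpace E] [T2Space E]
    [IsTopologicalAddGroup E] [ContinuousSMul ℝ E] [LocallyConvexSpace ℝ E] {s : Set E}
    (hs : s.Finite) : convexHull ℝ ((convexHull ℝ s).extremePoints ℝ) = convexHull ℝ s := by
  have hfin : ((convexHull ℝ s).extremePoints ℝ).Finite := hs.subset extremePoints_convexHull_subset
  rw [← (hfin.isClosed_convexHull ℝ).closure_eq]
  exact closure_convexHull_extremePoints (hs.isCompact_convexHull ℝ) (convex_convexHull ℝ s)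

end ExtremePoints

section VertexColumns

variable {m n : ℕ} {M : Matrix (Fin m) (Fin n) ℝ}

lemma sum_abs_ne_zero_iff_colNZ {j : Fin n} : ∑ i, |M i j| ≠ 0 ↔ colNZ M j := by
  simp [colNZ, funext_iff, Finset.sum_eq_zero_iff_of_nonneg]

lemma sum_abs_smul_normCol (M : Matrix (Fin m) (Fin n) ℝ) (j : Fin n) :
    (∑ i, |M i j|) • normCol M j = M.col j := by
  by_cases hj : colNZ M j
  · exact smul_inv_smul₀ (sum_abs_ne_zero_iff_colNZ.2 hj) _
  · have hcol : M.col j = 0 := not_not.1 hj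
    rw [not_not.1 (mt sum_abs_ne_zero_iff_colNZ.1 hj), zero_smul, hcol]

lemma finite_thetaCols (M : Matrix (Fin m) (Fin n) ℝ) : (thetaCols M).Finite :=
  (Set.finite_range (normCol M)).subset fun _ ⟨j, _, hj⟩ => ⟨j, hj.symm⟩

/-- The indices of the columns of `M` whose normalization is a vertex of `conv(θ(M))`. -/
def vertexCols (M : Matrix (Fin m) (Fin n) ℝ) : Set (Fin n) :=
  {j | colNZ M j ∧ normCol M j ∈ (convexHull ℝ (thetaCols M)).extremePoints ℝ}

lemma extremePoints_convexHull_thetaCols_subset (M : Matrix (Fin m) (Fin n) ℝ) :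
    (convexHull ℝ (thetaCols M)).extremePoints ℝ ⊆ normCol M '' vertexCols M := by
  intro x hx
  obtain ⟨j, hj, rfl⟩ := extremePoints_convexHull_subset hx
  exact ⟨j, ⟨hj, hx⟩, rfl⟩

lemma exists_mulVec_eq_of_mem_convexHull {s : Set (Fin n)} {x : Fin m → ℝ}
    (hx : x ∈ convexHull ℝ (normCol M '' s)) :
    ∃ b : Fin n → ℝ, 0 ≤ b ∧ (∀ k ∉ s, b k = 0) ∧ M *ᵥ b = x := by
  suffices normCol M '' s ⊆ M.mulVecLin '' {b | 0 ≤ b ∧ ∀ k ∉ s, b k = 0} by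
    have hconvex : Convex ℝ {b : Fin n → ℝ | 0 ≤ b ∧ ∀ k ∉ s, b k = 0} :=
      fun b hb b' hb' p q hp hq _ =>
        ⟨add_nonneg (smul_nonneg hp hb.1) (smul_nonneg hq hb'.1),
          fun k hk => by simp [hb.2 k hk, hb'.2 k hk]⟩
    obtain ⟨b, ⟨hb0, hbs⟩, hMb⟩ := convexHull_min this (hconvex.linear_image M.mulVecLin) hx
    exact ⟨b, hb0, hbs, hMb⟩
  rintro _ ⟨k, hk, rfl⟩
  refine ⟨Pi.single k (∑ i, |M i k|)⁻¹, ⟨Pi.single_nonneg.2 (by positivity), fun l hl => ?_⟩, ?_⟩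
  · exact Pi.single_eq_of_ne (ne_of_mem_of_not_mem hk hl).symm _
  · rw [mulVecLin_apply, mulVec_single, op_smul_eq_smul]
    rfl

lemma exists_mulVec_eq_col_of_vertexCols (M : Matrix (Fin m) (Fin n) ℝ) (j : Fin n) :
    ∃ b : Fin n → ℝ, 0 ≤ b ∧ (∀ k ∉ vertexCols M, b k = 0) ∧ M *ᵥ b = M.col j := by
  by_cases hj : colNZ M j
  · have hmem : normCol M j ∈ convexHull ℝ (normCol M '' vertexCols M) := by
      refine convexHull_mono (extremePoints_convexHull_thetaCols_subset M) ?_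
      rw [convexHull_extremePoints_convexHull_of_finite (finite_thetaCols M)]
      exact subset_convexHull ℝ _ ⟨j, hj, rfl⟩
    obtain ⟨b, hb0, hbV, hMb⟩ := exists_mulVec_eq_of_mem_convexHull hmem
    refine ⟨(∑ i, |M i j|) • b, smul_nonneg (by positivity) hb0,
      fun k hk => by simp [hbV k hk], ?_⟩
    rw [mulVec_smul, hMb, sum_abs_smul_normCol]
  · exact ⟨0, le_rfl, fun _ _ => rfl, (mulVec_zero M).trans (not_not.1 hj).symm⟩

lemma exists_normCol_eq_of_mulVec_eq_col (hM : ∀ i j, 0 ≤ M i j) {j : Fin n}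
    (hj : j ∈ vertexCols M) {b : Fin n → ℝ} (hb : 0 ≤ b) (hMb : M *ᵥ b = M.col j) :
    ∃ k, b k ≠ 0 ∧ colNZ M k ∧ normCol M k = normCol M j := by
  have hsum : ∑ k, b k * ∑ i, |M i k| = ∑ i, |M i j| := by
    simp only [abs_of_nonneg (hM _ _), Finset.mul_sum]
    rw [Finset.sum_comm]
    refine Finset.sum_congr rfl fun i _ => ?_
    simpa only [mulVec, dotProduct, mul_comm, col_apply] using congrFun hMb i
  have hcomb : Finset.univ.centerMass (fun k => b k * ∑ i, |M i k|) (normCol M) = normCol M j := by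
    have hMb' : ∑ k, b k • M.col k = (∑ i, |M i j|) • normCol M j := by
      simpa only [mulVec_eq_sum, op_smul_eq_smul, sum_abs_smul_normCol] using! hMb
    simp only [Finset.centerMass, hsum, mul_smul, sum_abs_smul_normCol, hMb']
    rw [← sum_abs_smul_normCol M j, inv_smul_smul₀ (sum_abs_ne_zero_iff_colNZ.2 hj.1)]
  obtain ⟨k, -, hk, hkj⟩ := exists_eq_of_centerMass_mem_extremePoints
    (convex_convexHull ℝ (thetaCols M)) (t := Finset.univ) (w := fun k => b k * ∑ i, |M i k|)
    (z := normCol M) (fun k _ => mul_nonneg (hb k) (by positivity))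
    (hsum ▸ (by positivity : 0 ≤ ∑ i, |M i j|).lt_of_ne' (sum_abs_ne_zero_iff_colNZ.2 hj.1))
    (fun k _ hk => subset_convexHull ℝ _
      ⟨k, sum_abs_ne_zero_iff_colNZ.1 (right_ne_zero_of_mul hk), rfl⟩)
    (hcomb ▸ hj.2)
  exact ⟨k, left_ne_zero_of_mul hk, sum_abs_ne_zero_iff_colNZ.1 (right_ne_zero_of_mul hk),
    hkj.trans hcomb⟩

lemma NonRepeatedVertices.apply_ne_zero_of_mulVec_eq_col (hvert : NonRepeatedVertices M)
    (hM : ∀ i j, 0 ≤ M i j) {j : Fin n} (hj : j ∈ vertexCols M) {b : Fin n → ℝ} (hb : 0 ≤ b)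
    (hMb : M *ᵥ b = M.col j) : b j ≠ 0 := by
  obtain ⟨k, hbk, hk, hkj⟩ := exists_normCol_eq_of_mulVec_eq_col hM hj hb hMb
  obtain rfl : k = j := (hvert _ hj.2).unique ⟨hk, hkj.symm⟩ ⟨hj.1, rfl⟩
  exact hbk

lemma exists_mem_columnMinimizers_vertexCols (hM : ∀ i j, 0 ≤ M i j) (j : Fin n) :
    ∃ b ∈ columnMinimizers M j, j ∉ vertexCols M → ∀ k ∉ vertexCols M, b k = 0 := by
  by_cases hj : j ∈ vertexCols M
  · obtain ⟨b, hb⟩ := columnMinimizers_nonempty hM j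
    exact ⟨b, hb, fun h => absurd hj h⟩
  · obtain ⟨b, hb0, hbV, hMb⟩ := exists_mulVec_eq_col_of_vertexCols M j
    exact ⟨b, mem_columnMinimizers_of_mulVec_eq hb0 (hbV j hj) hMb, fun _ => hbV⟩

lemma TigrelFeasible.noSubinvariantVector {B : Matrix (Fin n) (Fin n) ℝ} (hB : TigrelFeasible M B)
    (hM : ∀ i j, 0 ≤ M i j) (hvert : NonRepeatedVertices M)
    (hBV : ∀ j ∉ vertexCols M, ∀ k ∉ vertexCols M, B k j = 0) : NoSubinvariantVector B := by
  obtain ⟨hB0, hdiag, hMB⟩ := hB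
  intro x hx hxB
  have hvertex : ∀ j ∈ vertexCols M, x j = 0 := by
    intro j hj
    by_contra hxj
    have hMBj : M *ᵥ B.col j = M.col j := funext (mul_apply_eq_of_le_mulVec hM hMB hx hxB hxj)
    exact hvert.apply_ne_zero_of_mulVec_eq_col hM hj (fun k => hB0 k j) hMBj (hdiag j)
  funext k
  by_cases hk : k ∈ vertexCols M
  · exact hvertex k hk
  · have hBx : ∑ j, B k j * x j = 0 := by
      refine Finset.sum_eq_zero fun j _ => ?_
      by_cases hj : j ∈ vertexCols M
      · rw [hvertex j hj, mul_zero]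
      · rw [hBV j hj k hk, zero_mul]
    exact ((hxB k).trans_eq hBx).antisymm (hx k)

end VertexColumns

/-- if the vertices of `conv(θ(M))` are non-repeated, there exists an
optimal solution `B*` of (tigrel) with `ρ(B*) < 1`, i.e. `Q = I − B*` is inverse
positive. -/
theorem stmt13 {m n : ℕ} (M : Matrix (Fin m) (Fin n) ℝ) (hM : ∀ i j, 0 ≤ M i j)
    (hvert : NonRepeatedVertices M) :
    ∃ B : Matrix (Fin n) (Fin n) ℝ, TigrelOpt M B ∧
      spectralRadius ℂ (B.map (fun x => (x : ℂ))) < 1 ∧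
      IsUnit (1 - B).det ∧ ∀ i j, 0 ≤ (1 - B)⁻¹ i j := by
  choose b hb hbV using exists_mem_columnMinimizers_vertexCols hM
  let B : Matrix (Fin n) (Fin n) ℝ := (of b)ᵀ
  have hopt : TigrelOpt M B := tigrelOpt_of_forall_col_mem_columnMinimizers hb
  have hB0 : ∀ i j, 0 ≤ B i j := hopt.1.1
  have hsub : NoSubinvariantVector B := hopt.1.noSubinvariantVector hM hvert hbV
  exact ⟨B, hopt, hsub.spectralRadius_lt_one hB0,
    (isUnit_iff_isUnit_det _).1 (hsub.isUnit_one_sub hB0), hsub.inv_one_sub_nonneg hB0⟩
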